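/- arXiv:2205.09833 — 2 statements merged into one kernel-verified Lean document; each statement's English description precedes it below -/
import Mathlib

section
/- Let n ≥ 1 and let T be a nonzero real n×n matrix with spectral radius ρ(T) (the maximum modulus of its complex eigenvalues). For every ε > 0 and every δ with 0 < δ < 1, there exist natural numbers M and K ≥ 1 such that for every m > M the following holds: if x₁, …, x_m are chosen independently and uniformly at random from the unit sphere {x ∈ ℝⁿ : ‖x‖ = 1} (i.e., according to the m-fold product of the normalized uniform (rotation-invariant) probability measure on the sphere), then with probability greater than 1 − δ one has |ρ(T) − (max_{1≤j≤m} ‖Tᴷ x_j‖)^{1/K}| < ε, where ‖·‖ denotes the Euclidean norm. -/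
open MeasureTheory Metric

/-- The normalized uniform (rotation-invariant) probability measure on the unit sphere of
`ℝⁿ`, obtained by normalizing the cone (surface) measure induced by the Lebesgue measure. -/
noncomputable def uniformSphereMeasure (n : ℕ) :
    Measure (sphere (0 : EuclideanSpace ℝ (Fin n)) 1) :=
  ((volume : Measure (EuclideanSpace ℝ (Fin n))).toSphere Set.univ)⁻¹ •
    (volume : Measure (EuclideanSpace ℝ (Fin n))).toSphere

open scoped Matrix.Norms.Operator in
theorem aux_norm_map (n : ℕ) (A : Matrix (Fin n) (Fin n) ℝ) :
    ‖A.map (algebraMap ℝ ℂ)‖ = ‖A‖ := by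
  simp [Matrix.linfty_opNorm_def]

theorem aux_equiv_gen {E F : Type*} [NormedAddCommGroup E] [NormedSpace ℝ E]
    [NormedAddCommGroup F] [NormedSpace ℝ F] [FiniteDimensional ℝ E] (e : E ≃ₗ[ℝ] F) :
    ∃ c C : ℝ, 0 < c ∧ 0 < C ∧ ∀ A : E, c * ‖A‖ ≤ ‖e A‖ ∧ ‖e A‖ ≤ C * ‖A‖ := by
  let f := e.toContinuousLinearEquiv
  let g : E →L[ℝ] F := f.toContinuousLinearMap
  let g' : F →L[ℝ] E := f.symm.toContinuousLinearMap
  have hg := norm_nonneg g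
  have hg' := norm_nonneg g'
  refine ⟨(‖g'‖ + 1)⁻¹, ‖g‖ + 1, by positivity, by positivity, fun A => ⟨?_, ?_⟩⟩
  · rw [inv_mul_le_iff₀ (by positivity)]
    have h := g'.le_opNorm (e A)
    have h2 : g' (e A) = A := f.symm_apply_apply A
    rw [h2] at h
    nlinarith [norm_nonneg (e A)]
  · have h : ‖e A‖ ≤ ‖g‖ * ‖A‖ := g.le_opNorm A
    nlinarith [norm_nonneg A]

open scoped Matrix.Norms.Operator in
theorem aux_equiv (n : ℕ) : ∃ c C : ℝ, 0 < c ∧ 0 < C ∧ ∀ A : Matrix (Fin n) (Fin n) ℝ,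
    c * ‖A‖ ≤ ‖Matrix.toEuclideanCLM (𝕜 := ℝ) A‖ ∧
    ‖Matrix.toEuclideanCLM (𝕜 := ℝ) A‖ ≤ C * ‖A‖ :=
  aux_equiv_gen (Matrix.toEuclideanCLM (n := Fin n) (𝕜 := ℝ)).toAlgEquiv.toLinearEquiv

open scoped Matrix.Norms.Operator in
theorem aux_gelfand0 (n : ℕ) (hn : 1 ≤ n) (T : Matrix (Fin n) (Fin n) ℝ) :
    Filter.Tendsto (fun k : ℕ => ‖T ^ k‖ ^ ((1 : ℝ) / k)) Filter.atTop
      (nhds (spectralRadius ℂ (T.map (algebraMap ℝ ℂ))).toReal) := by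
  have : Nonempty (Fin n) := ⟨⟨0, hn⟩⟩
  have h := spectrum.pow_norm_pow_one_div_tendsto_nhds_spectralRadius (T.map (algebraMap ℝ ℂ))
  have hfin : spectralRadius ℂ (T.map (algebraMap ℝ ℂ)) ≠ ⊤ :=
    ((spectrum.spectralRadius_le_nnnorm (𝕜 := ℂ) (T.map (algebraMap ℝ ℂ))).trans_lt
      ENNReal.coe_lt_top).ne
  have h2 := (ENNReal.tendsto_toReal hfin).comp h
  refine h2.congr fun k => ?_
  have h3 : (T.map (algebraMap ℝ ℂ)) ^ k = (T ^ k).map (algebraMap ℝ ℂ) :=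
    (map_pow (algebraMap ℝ ℂ).mapMatrix T k).symm
  simp only [Function.comp]
  rw [ENNReal.toReal_ofReal (by positivity), h3, aux_norm_map]

theorem aux_const (c : ℝ) (hc : 0 < c) :
    Filter.Tendsto (fun k : ℕ => c ^ ((1 : ℝ) / k)) Filter.atTop (nhds 1) := by
  have h := (Real.continuousAt_const_rpow (a := c) (b := 0) hc.ne').tendsto.comp
    (tendsto_one_div_atTop_nhds_zero_nat (𝕜 := ℝ))
  simpa [Function.comp_def] using h

open scoped Matrix.Norms.Operator in
theorem aux_gelfand (n : ℕ) (hn : 1 ≤ n) (T : Matrix (Fin n) (Fin n) ℝ) :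
    Filter.Tendsto (fun k : ℕ => ‖(Matrix.toEuclideanCLM (𝕜 := ℝ) T) ^ k‖ ^ ((1 : ℝ) / k))
      Filter.atTop (nhds (spectralRadius ℂ (T.map (algebraMap ℝ ℂ))).toReal) := by
  obtain ⟨c, C, hc, hC, h⟩ := aux_equiv n
  have h0 := aux_gelfand0 n hn T
  have h1 := (aux_const c hc).mul h0
  have h2 := (aux_const C hC).mul h0
  rw [one_mul] at h1 h2
  refine tendsto_of_tendsto_of_tendsto_of_le_of_le h1 h2 (fun k => ?_) (fun k => ?_)
  · beta_reduce
    rw [← map_pow, ← Real.mul_rpow hc.le (norm_nonneg _)]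
    exact Real.rpow_le_rpow (mul_nonneg hc.le (norm_nonneg _)) (h _).1 (by positivity)
  · beta_reduce
    rw [← map_pow, ← Real.mul_rpow hC.le (norm_nonneg _)]
    exact Real.rpow_le_rpow (norm_nonneg _) (h _).2 (by positivity)

theorem aux_prob (n : ℕ) (hn : 1 ≤ n) : IsProbabilityMeasure (uniformSphereMeasure n) := by
  have : Nonempty (Fin n) := ⟨⟨0, hn⟩⟩
  constructor
  rw [uniformSphereMeasure, Measure.smul_apply, smul_eq_mul]
  refine ENNReal.inv_mul_cancel ?_ (measure_ne_top _ _)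
  rw [Ne, Measure.measure_univ_eq_zero]
  exact Measure.toSphere_ne_zero _

theorem aux_open (n : ℕ) (U : Set (sphere (0 : EuclideanSpace ℝ (Fin n)) 1))
    (hU : IsOpen U) (hne : U.Nonempty) : uniformSphereMeasure n U ≠ 0 := by
  rw [uniformSphereMeasure, Measure.smul_apply, smul_eq_mul]
  exact mul_ne_zero (ENNReal.inv_ne_zero.2 (measure_ne_top _ _)) (hU.measure_ne_zero _ hne)

theorem aux_unit (n : ℕ) (hn : 1 ≤ n)
    (A : EuclideanSpace ℝ (Fin n) →L[ℝ] EuclideanSpace ℝ (Fin n)) (r : ℝ) (hr : r < ‖A‖) :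
    ∃ x : sphere (0 : EuclideanSpace ℝ (Fin n)) 1, r < ‖A x‖ := by
  have : Nonempty (Fin n) := ⟨⟨0, hn⟩⟩
  by_contra! hcon
  obtain ⟨x0⟩ : Nonempty (sphere (0 : EuclideanSpace ℝ (Fin n)) 1) :=
    (NormedSpace.sphere_nonempty.2 zero_le_one).to_subtype
  have hr0 : 0 ≤ r := (norm_nonneg _).trans (hcon x0)
  have := ContinuousLinearMap.opNorm_le_of_unit_norm (f := A) hr0
    (fun x hx => hcon ⟨x, by simpa using hx⟩)
  linarith

/-- **Theorem 1 (stochastic approximation of the spectral radius).**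
Let `n ≥ 1` and let `T` be a nonzero real `n × n` matrix with spectral radius `ρ(T)` (the
maximum modulus of its complex eigenvalues). For every `ε > 0` and `0 < δ < 1` there exist
`M` and `K ≥ 1` such that for every `m > M`: if `x₁, …, x_m` are drawn i.i.d. from the
normalized uniform measure on the unit sphere of `ℝⁿ` (the joint law being the `m`-fold
product measure), then with probability greater than `1 - δ`,
`|ρ(T) - (max_j ‖T^K x_j‖)^(1/K)| < ε`. -/
theorem prob_spectralRadius_approx (n : ℕ) (hn : 1 ≤ n)
    (T : Matrix (Fin n) (Fin n) ℝ) (hT : T ≠ 0)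
    (ε δ : ℝ) (hε : 0 < ε) (hδ0 : 0 < δ) (hδ1 : δ < 1) :
    ∃ M K : ℕ, 1 ≤ K ∧ ∀ m : ℕ, M < m →
      1 - ENNReal.ofReal δ <
        (Measure.pi fun _ : Fin m => uniformSphereMeasure n)
          {x : Fin m → sphere (0 : EuclideanSpace ℝ (Fin n)) 1 |
            |(spectralRadius ℂ (T.map (algebraMap ℝ ℂ))).toReal -
                (⨆ j : Fin m, ‖(Matrix.toEuclideanCLM (𝕜 := ℝ) T ^ K)
                  ((x j : EuclideanSpace ℝ (Fin n)))‖) ^ ((1 : ℝ) / K)| < ε} := by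
  have := aux_prob n hn
  set ρ := (spectralRadius ℂ (T.map (algebraMap ℝ ℂ))).toReal with hρ
  obtain ⟨K, hK1, hK⟩ := (((Metric.tendsto_nhds.1 (aux_gelfand n hn T) ε hε).and
    (Filter.eventually_ge_atTop 1)).exists.imp fun k h => ⟨h.2, h.1⟩ :
      ∃ K : ℕ, 1 ≤ K ∧ dist _ _ < ε)
  set A := Matrix.toEuclideanCLM (𝕜 := ℝ) T ^ K with hA
  have hKpos : (0 : ℝ) < 1 / K := by
    have : (0 : ℝ) < K := by exact_mod_cast hK1
    positivity
  have hcont : Continuous fun t : ℝ => dist (t ^ ((1 : ℝ) / K)) ρ :=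
    (Real.continuous_rpow_const hKpos.le).dist continuous_const
  obtain ⟨η, hη, hball⟩ := Metric.isOpen_iff.1 (isOpen_Iio.preimage hcont) ‖A‖ hK
  let U : Set (sphere (0 : EuclideanSpace ℝ (Fin n)) 1) := {x | ‖A‖ - η < ‖A x‖}
  have hUo : IsOpen U := isOpen_lt continuous_const (by fun_prop)
  have hUne : U.Nonempty := aux_unit n hn A _ (by linarith)
  have hq : uniformSphereMeasure n Uᶜ < 1 := by
    rw [prob_compl_eq_one_sub hUo.measurableSet]
    exact ENNReal.sub_lt_self ENNReal.one_ne_top one_ne_zero (aux_open n U hUo hUne)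
  have hlim := ENNReal.tendsto_pow_atTop_nhds_zero_of_lt_one hq
  obtain ⟨M, hM⟩ := Filter.eventually_atTop.1
    (hlim.eventually (gt_mem_nhds (ENNReal.ofReal_pos.2 hδ0)))
  refine ⟨M, K, hK1, fun m hm => ?_⟩
  have : Nonempty (Fin m) := ⟨⟨0, by omega⟩⟩
  have hmeas : MeasurableSet (Set.univ.pi fun _ : Fin m => Uᶜ) :=
    MeasurableSet.univ_pi fun _ => hUo.measurableSet.compl
  have hlt : (Measure.pi fun _ : Fin m => uniformSphereMeasure n)
      (Set.univ.pi fun _ : Fin m => Uᶜ) < ENNReal.ofReal δ := by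
    rw [Measure.pi_pi]
    simpa using hM m hm.le
  have h1 : 1 - ENNReal.ofReal δ < (Measure.pi fun _ : Fin m => uniformSphereMeasure n)
      (Set.univ.pi fun _ : Fin m => Uᶜ)ᶜ := by
    rw [prob_compl_eq_one_sub hmeas]
    have hle := ENNReal.ofReal_le_one.2 hδ1.le
    exact (ENNReal.cancel_of_ne (ENNReal.sub_ne_top ENNReal.one_ne_top)).tsub_lt_tsub_left_of_le hle hlt
  refine h1.trans_le (measure_mono fun x hx => ?_)
  have hx' : ∃ j, x j ∈ U := by
    by_contra! hcon
    exact hx fun j _ => hcon j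
  obtain ⟨j, hj⟩ := hx'
  have hbound : ∀ i, ‖A (x i)‖ ≤ ‖A‖ := fun i => A.unit_le_opNorm _ (by simp)
  have hup : (⨆ j : Fin m, ‖A (x j)‖) ≤ ‖A‖ := ciSup_le hbound
  have hlo : ‖A (x j)‖ ≤ ⨆ j : Fin m, ‖A (x j)‖ :=
    le_ciSup (f := fun j => ‖A (x j)‖) ⟨‖A‖, by rintro _ ⟨i, rfl⟩; exact hbound i⟩ j
  have hj' : ‖A‖ - η < ‖A (x j)‖ := hj
  have := hball (a := ⨆ j : Fin m, ‖A (x j)‖) (by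
    rw [Metric.mem_ball, Real.dist_eq, abs_lt]; constructor <;> linarith)
  have h4 : dist ((⨆ j : Fin m, ‖A (x j)‖) ^ ((1 : ℝ) / K)) ρ < ε := this
  rw [dist_comm, Real.dist_eq] at h4
  exact h4
end

section
/- Let T be a real n×n matrix, K ≥ 1 a natural number, and let x*, x_r ∈ ℝⁿ be vectors with ‖x*‖ = ‖x_r‖ = 1 and ‖Tᴷ x_r‖ ≤ ‖Tᴷ x*‖, where ‖·‖ is the Euclidean norm. Then ‖Tᴷ x*‖^{1/K} − ‖Tᴷ x_r‖^{1/K} ≤ ‖Tᴷ‖^{1/K} · ‖x* − x_r‖^{1/K}, where ‖Tᴷ‖ denotes the operator norm of Tᴷ with respect to the Euclidean norm. -/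
/-- For a real `n × n` matrix `T`, `K ≥ 1`, and unit vectors `x*`, `x_r` in `ℝⁿ` with
`‖T^K x_r‖ ≤ ‖T^K x*‖`, one has
`‖T^K x*‖^(1/K) - ‖T^K x_r‖^(1/K) ≤ ‖T^K‖^(1/K) * ‖x* - x_r‖^(1/K)`. -/
theorem root_norm_sub_le (n : ℕ) (T : Matrix (Fin n) (Fin n) ℝ) (K : ℕ) (hK : 1 ≤ K)
    (xstar xr : EuclideanSpace ℝ (Fin n)) (hxstar : ‖xstar‖ = 1) (hxr : ‖xr‖ = 1)
    (h : ‖(Matrix.toEuclideanCLM (𝕜 := ℝ) T ^ K) xr‖ ≤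
          ‖(Matrix.toEuclideanCLM (𝕜 := ℝ) T ^ K) xstar‖) :
    ‖(Matrix.toEuclideanCLM (𝕜 := ℝ) T ^ K) xstar‖ ^ ((1 : ℝ) / K) -
        ‖(Matrix.toEuclideanCLM (𝕜 := ℝ) T ^ K) xr‖ ^ ((1 : ℝ) / K) ≤
      ‖Matrix.toEuclideanCLM (𝕜 := ℝ) T ^ K‖ ^ ((1 : ℝ) / K) *
        ‖xstar - xr‖ ^ ((1 : ℝ) / K) := by
  generalize Matrix.toEuclideanCLM (𝕜 := ℝ) T ^ K = A at h ⊢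
  have hp0 : (0 : ℝ) ≤ 1 / K := by positivity
  have hp1 : (1 : ℝ) / K ≤ 1 := by
    have hK' : (1 : ℝ) ≤ K := by exact_mod_cast hK
    rw [div_le_one (by linarith)]
    exact hK'
  have h1 : ‖A xstar‖ ≤ ‖A‖ * ‖xstar - xr‖ + ‖A xr‖ := by
    have h2 := A.le_opNorm (xstar - xr)
    rw [map_sub] at h2
    have h3 := norm_sub_norm_le (A xstar) (A xr)
    linarith
  have h4 := Real.rpow_le_rpow (norm_nonneg _) h1 hp0
  have h5 := Real.rpow_add_le_add_rpow (a := ‖A‖ * ‖xstar - xr‖) (b := ‖A xr‖)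
    (by positivity) (norm_nonneg _) hp0 hp1
  rw [Real.mul_rpow (norm_nonneg _) (norm_nonneg _)] at h5
  linarith
end
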